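/- arXiv:2401.02067 — 3 statements merged into one kernel-verified Lean document; each statement's English description precedes it below -/
import Mathlib

section
/- Let k be a Brauer field and let d = (d_1, ..., d_r) be a multi-degree. Then there exists a constant C, depending only on d and k, with the following property: for every finite-dimensional k-vector space V with dim V > C and every tuple f = (f_1, ..., f_r) of homogeneous polynomial functions on V of degrees d_1, ..., d_r, there exists a nonzero vector v ∈ V with f_1(v) = ... = f_r(v) = 0. -/
open MvPolynomial

/-- A field `k` is a *Brauer field* if for every `d ≥ 1` there is an `N` such that every
diagonal equation `a_1 x_1^d + ⋯ + a_n x_n^d = 0` with `n > N` has a nontrivial solution. -/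
def IsBrauerField (k : Type*) [Field k] : Prop :=
  ∀ d : ℕ, 1 ≤ d → ∃ N : ℕ, ∀ n : ℕ, N < n → ∀ a : Fin n → k,
    ∃ x : Fin n → k, x ≠ 0 ∧ ∑ i, a i * x i ^ d = 0

section BrauerAux

open scoped Classical

/-- Systems of diagonal equations of the same degree are solvable. -/
lemma diag_system {k : Type*} [Field k] (hk : IsBrauerField k) (d : ℕ) (hd : 1 ≤ d) (r : ℕ) :
    ∃ (ι : Type) (_ : Fintype ι), ∀ S : Finset (ι → k), S.card ≤ r →
      ∃ x : ι → k, x ≠ 0 ∧ ∀ a ∈ S, ∑ i, a i * x i ^ d = 0 := by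
  induction r with
  | zero =>
    refine ⟨Unit, inferInstance, fun S hS => ⟨fun _ => 1, ?_, ?_⟩⟩
    · intro h
      simpa using congrFun h ()
    · simp at hS
      simp [hS]
  | succ r ih =>
    obtain ⟨ι, _, hι⟩ := ih
    obtain ⟨N, hN⟩ := hk d hd
    refine ⟨ι × Fin (N + 1), inferInstance, fun S hS => ?_⟩
    have key : ∃ a : ι × Fin (N + 1) → k, ∃ S' : Finset (ι × Fin (N + 1) → k),
        S'.card ≤ r ∧ S ⊆ insert a S' := by
      rcases S.eq_empty_or_nonempty with h | ⟨a, ha⟩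
      · exact ⟨0, ∅, by simp, by simp [h]⟩
      · refine ⟨a, S.erase a, ?_, ?_⟩
        · rw [Finset.card_erase_of_mem ha]; omega
        · rw [Finset.insert_erase ha]
    obtain ⟨a, S', hS', hsub⟩ := key
    choose y hy0 hy using fun i : ι => hN (N + 1) (Nat.lt_succ_self N) (fun l => a (i, l))
    obtain ⟨z, hz0, hz⟩ := hι (S'.image (fun b i => ∑ l, b (i, l) * y i l ^ d))
      (Finset.card_image_le.trans hS')
    have comp : ∀ b : ι × Fin (N + 1) → k, ∑ p, b p * (z p.1 * y p.1 p.2) ^ d =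
        ∑ i, (∑ l, b (i, l) * y i l ^ d) * z i ^ d := by
      intro b
      rw [Fintype.sum_prod_type]
      refine Finset.sum_congr rfl fun i _ => ?_
      rw [Finset.sum_mul]
      refine Finset.sum_congr rfl fun l _ => ?_
      ring
    refine ⟨fun p => z p.1 * y p.1 p.2, ?_, ?_⟩
    · obtain ⟨i, hi⟩ := Function.ne_iff.mp hz0
      obtain ⟨l, hl⟩ := Function.ne_iff.mp (hy0 i)
      intro h
      exact mul_ne_zero hi hl (congrFun h (i, l))
    · intro b hb
      rw [comp]
      rcases Finset.mem_insert.mp (hsub hb) with rfl | hb'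
      · simp [hy]
      · exact hz _ (Finset.mem_image_of_mem _ hb')

/-- Bihomogeneity of total degree `D` for a polynomial with polynomial coefficients. -/
def BiGood {k ι τ : Type*} [Field k] (D : ℕ) (F : MvPolynomial ι (MvPolynomial τ k)) : Prop :=
  ∀ α β, coeff β (coeff α F) ≠ 0 → α.degree + β.degree = D

lemma BiGood.mul {k ι τ : Type*} [Field k] {D E : ℕ} {F G : MvPolynomial ι (MvPolynomial τ k)}
    (hF : BiGood D F) (hG : BiGood E G) : BiGood (D + E) (F * G) := by
  intro α β h
  rw [coeff_mul, coeff_sum] at h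
  obtain ⟨p, hp, h⟩ := Finset.exists_ne_zero_of_sum_ne_zero h
  rw [coeff_mul] at h
  obtain ⟨q, hq, h⟩ := Finset.exists_ne_zero_of_sum_ne_zero h
  have h1 := hF _ _ (left_ne_zero_of_mul h)
  have h2 := hG _ _ (right_ne_zero_of_mul h)
  rw [Finset.HasAntidiagonal.mem_antidiagonal] at hp hq
  rw [← hp, ← hq, map_add, map_add]
  omega

lemma BiGood.add {k ι τ : Type*} [Field k] {D : ℕ} {F G : MvPolynomial ι (MvPolynomial τ k)}
    (hF : BiGood D F) (hG : BiGood D G) : BiGood D (F + G) := by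
  intro α β h
  rw [coeff_add, coeff_add] at h
  by_cases h1 : coeff β (coeff α F) = 0
  · exact hG _ _ (by simpa [h1] using h)
  · exact hF _ _ h1

lemma BiGood.zero {k ι τ : Type*} [Field k] {D : ℕ} :
    BiGood D (0 : MvPolynomial ι (MvPolynomial τ k)) := by
  intro α β h
  simp at h

lemma BiGood.CC {k ι τ : Type*} [Field k] (c : k) :
    BiGood 0 (C (C c) : MvPolynomial ι (MvPolynomial τ k)) := by
  intro α β h
  rw [coeff_C] at h
  split_ifs at h with h1
  · rw [coeff_C] at h
    split_ifs at h with h2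
    · simp [← h1, ← h2]
    · simp at h
  · simp at h

lemma BiGood.pow {k ι τ : Type*} [Field k] {D : ℕ} {F : MvPolynomial ι (MvPolynomial τ k)}
    (hF : BiGood D F) (n : ℕ) : BiGood (n * D) (F ^ n) := by
  induction n with
  | zero => simpa using BiGood.CC (ι := ι) (τ := τ) (1 : k)
  | succ n ih =>
    rw [pow_succ, Nat.succ_mul]
    exact ih.mul hF

lemma BiGood.prod {k ι τ σ : Type*} [Field k] (s : Finset σ) (D : σ → ℕ)
    (F : σ → MvPolynomial ι (MvPolynomial τ k))
    (hF : ∀ i, BiGood (D i) (F i)) : BiGood (∑ i ∈ s, D i) (∏ i ∈ s, F i) := by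
  induction s using Finset.induction_on with
  | empty => simpa using BiGood.CC (ι := ι) (τ := τ) (1 : k)
  | insert a s ha ih =>
    rw [Finset.sum_insert ha, Finset.prod_insert ha]
    exact (hF a).mul ih

lemma BiGood.sum {k ι τ σ : Type*} [Field k] (s : Finset σ) (D : ℕ)
    (F : σ → MvPolynomial ι (MvPolynomial τ k))
    (hF : ∀ i ∈ s, BiGood D (F i)) : BiGood D (∑ i ∈ s, F i) := by
  induction s using Finset.induction_on with
  | empty => simpa using BiGood.zero
  | insert a s ha ih =>
    rw [Finset.sum_insert ha]
    exact (hF a (by simp)).add (ih fun i hi => hF i (by simp [hi]))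

lemma BiGood.X {k ι τ : Type*} [Field k] (i : ι) :
    BiGood 1 (X i : MvPolynomial ι (MvPolynomial τ k)) := by
  intro α β h
  rw [coeff_X] at h
  split_ifs at h with h1
  · rw [coeff_one] at h
    split_ifs at h with h2
    · simp [← h1, ← h2]
    · simp at h
  · simp at h

lemma BiGood.CX {k ι τ : Type*} [Field k] (i : τ) :
    BiGood 1 (C (MvPolynomial.X i) : MvPolynomial ι (MvPolynomial τ k)) := by
  intro α β h
  rw [coeff_C] at h
  split_ifs at h with h1
  · rw [coeff_X] at h
    split_ifs at h with h2
    · simp [← h1, ← h2]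
    · simp at h
  · simp at h

/-- The substitution `f(x e + w)` with `w` in block `i0`. -/
noncomputable def blockSub {k ι τ : Type*} [Field k] (e : ι → τ → k) (i0 : ι)
    (f : MvPolynomial (ι × τ) k) : MvPolynomial ι (MvPolynomial τ k) :=
  eval₂ (C.comp C) (fun p => C (C (e p.1 p.2)) * X p.1 + C (if p.1 = i0 then X p.2 else 0)) f

lemma blockSub_good {k ι τ : Type*} [Field k] (e : ι → τ → k) (i0 : ι)
    (f : MvPolynomial (ι × τ) k) (D : ℕ) (hf : f.IsHomogeneous D) :
    BiGood D (blockSub e i0 f) := by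
  rw [blockSub, eval₂_eq]
  refine BiGood.sum _ _ _ fun s hs => ?_
  have hD : s.degree = D := by
    have := hf (mem_support_iff.mp hs)
    rw [Finsupp.degree_eq_weight_one]
    exact this
  have : D = 0 + ∑ i ∈ s.support, s i * 1 := by
    simp [← hD, Finsupp.degree_apply]
  rw [this]
  refine (BiGood.CC _).mul (BiGood.prod _ _ _ fun p => BiGood.pow ?_ _)
  refine BiGood.add ?_ ?_
  · simpa using (BiGood.CC _).mul (BiGood.X _)
  · split_ifs
    · exact BiGood.CX _
    · simpa using BiGood.zero

lemma blockSub_eval {k ι τ : Type*} [Field k] (e : ι → τ → k) (i0 : ι)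
    (f : MvPolynomial (ι × τ) k) (x : ι → k) (w : τ → k) :
    eval (fun p => x p.1 * e p.1 p.2 + if p.1 = i0 then w p.2 else 0) f =
      ∑ α ∈ (blockSub e i0 f).support, eval w (coeff α (blockSub e i0 f)) *
        ∏ i ∈ α.support, x i ^ α i := by
  have h1 := eval₂_eq (eval w) x (blockSub e i0 f)
  rw [← h1, blockSub]
  rw [← coe_eval₂Hom (eval w) x, hom_eval₂]
  have h2 : ((eval₂Hom (eval w) x).comp ((C : MvPolynomial τ k →+* _).comp C)) = RingHom.id k := by
    ext a; simp
  rw [h2]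
  show eval₂ (RingHom.id k) _ f = _
  congr 1
  funext p
  simp only [Function.comp, map_add, map_mul, coe_eval₂Hom, eval₂_C, eval₂_X, eval_C]
  split_ifs <;> simp [mul_comm]

lemma hom_eval_smul {k τ : Type*} [Field k] (g : MvPolynomial τ k) (j : ℕ)
    (hg : g.IsHomogeneous j) (y : k) (w : τ → k) :
    eval (fun t => y * w t) g = y ^ j * eval w g := by
  rw [eval_eq, eval_eq, Finset.mul_sum]
  refine Finset.sum_congr rfl fun s hs => ?_
  have hD : s.degree = j := by
    have := hg (mem_support_iff.mp hs)
    rw [Finsupp.degree_eq_weight_one]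
    exact this
  simp_rw [mul_pow]
  rw [Finset.prod_mul_distrib, Finset.prod_pow_eq_pow_sum, ← hD, Finsupp.degree_apply]
  ring

/-- The inductive assertion. -/
def BrauerP (k : Type*) [Field k] (d : ℕ) : Prop :=
  ∀ R : ℕ, ∃ (τ : Type) (_ : Fintype τ), ∀ S : Finset (MvPolynomial τ k), S.card ≤ R →
    (∀ f ∈ S, ∃ j, 1 ≤ j ∧ j ≤ d ∧ f.IsHomogeneous j) →
    ∃ v : τ → k, v ≠ 0 ∧ ∀ f ∈ S, eval v f = 0

lemma brauerP_zero (k : Type*) [Field k] : BrauerP k 0 := by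
  intro R
  refine ⟨Unit, inferInstance, fun S _ hS => ⟨fun _ => 1, ?_, ?_⟩⟩
  · intro h
    simpa using congrFun h ()
  · intro f hf
    obtain ⟨j, h1, h2, -⟩ := hS f hf
    omega

lemma step_aux {k ι τ : Type*} [Field k] [Fintype ι] (d : ℕ) (e : ι → τ → k) (i0 : ι)
    (f : MvPolynomial (ι × τ) k) (D : ℕ) (hf : f.IsHomogeneous D) (hD : D ≤ d + 1) (w : τ → k)
    (hw : ∀ α : ι →₀ ℕ, α.degree ≤ d + 1 → ∀ j, 1 ≤ j → j ≤ d →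
      (coeff α (blockSub e i0 f)).IsHomogeneous j → eval w (coeff α (blockSub e i0 f)) = 0) :
    ∃ c : k, ∀ (x : ι → k) (y : k),
      eval (fun p => x p.1 * e p.1 p.2 + if p.1 = i0 then y * w p.2 else 0) f =
      eval (fun p => x p.1 * e p.1 p.2) f + c * y ^ (d + 1) := by
  set F := blockSub e i0 f with hF
  have good : BiGood D F := blockSub_good e i0 f D hf
  have hom : ∀ α ∈ F.support, ∃ j, α.degree + j = D ∧ (coeff α F).IsHomogeneous j := by
    intro α hα
    obtain ⟨β, hβ⟩ := MvPolynomial.exists_coeff_ne_zero (mem_support_iff.mp hα)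
    refine ⟨β.degree, good _ _ hβ, fun γ hγ => ?_⟩
    have h1 := good _ _ hβ
    have h2 := good _ _ hγ
    have h3 : γ.degree = β.degree := by omega
    rw [← h3, Finsupp.degree_eq_weight_one]
    rfl
  have key : ∃ c : (ι →₀ ℕ) → k, (∀ α, α ≠ 0 → c α = 0) ∧ ∀ α ∈ F.support, ∀ y : k,
      eval (fun t => y * w t) (coeff α F) =
        eval (fun _ => (0 : k)) (coeff α F) + c α * y ^ (d + 1) := by
    have : ∀ α : ι →₀ ℕ, ∃ c : k, (α ≠ 0 → c = 0) ∧ (α ∈ F.support → ∀ y : k,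
      eval (fun t => y * w t) (coeff α F) =
        eval (fun _ => (0 : k)) (coeff α F) + c * y ^ (d + 1)) := by
      intro α
      by_cases hα : α ∈ F.support
      swap
      · exact ⟨0, fun _ => rfl, fun h => absurd h hα⟩
      obtain ⟨j, hj, hom⟩ := hom α hα
      have h0 := hom_eval_smul _ j hom 0 w
      simp only [zero_mul] at h0
      rcases Nat.eq_zero_or_pos j with rfl | hj1
      · refine ⟨0, fun _ => rfl, fun _ y => ?_⟩
        rw [hom_eval_smul _ 0 hom, h0]
        simp
      · have h00 : (0 : k) ^ j = 0 := zero_pow (by omega)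
        by_cases hjd : j ≤ d
        · refine ⟨0, fun _ => rfl, fun _ y => ?_⟩
          rw [hom_eval_smul _ j hom, h0, hw α (by omega) j hj1 hjd hom]
          simp
        · have hj2 : j = d + 1 := by omega
          refine ⟨eval w (coeff α F), fun h => ?_, fun _ y => ?_⟩
          · exact absurd ((Finsupp.degree_eq_zero_iff α).mp (by omega)) h
          · rw [hom_eval_smul _ j hom, h0, h00, hj2]
            ring
    choose c hc using this
    exact ⟨c, fun α => (hc α).1, fun α => (hc α).2⟩
  obtain ⟨c, hc0, hc⟩ := key
  refine ⟨∑ α ∈ F.support, c α, fun x y => ?_⟩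
  have e1 := blockSub_eval e i0 f x (fun t => y * w t)
  have e2 := blockSub_eval e i0 f x (fun _ => 0)
  simp only [ite_self, add_zero] at e2
  rw [e1, e2, Finset.sum_mul, ← Finset.sum_add_distrib]
  refine Finset.sum_congr rfl fun α hα => ?_
  rw [← hF, hc α hα y, add_mul]
  congr 1
  by_cases h : α = 0
  · subst h; simp
  · rw [hc0 α h]; simp

lemma brauerP_succ {k : Type*} [Field k] (hk : IsBrauerField k) (d : ℕ) (ih : BrauerP k d) :
    BrauerP k (d + 1) := by
  intro R
  obtain ⟨ι, _, hι⟩ := diag_system hk (d + 1) (by omega) R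
  let A : Finset (ι →₀ ℕ) :=
    (Finset.range (d + 2)).biUnion fun j => (Finset.univ : Finset ι).finsuppAntidiag j
  have hA : ∀ α : ι →₀ ℕ, α.degree ≤ d + 1 → α ∈ A := by
    intro α hα
    simp only [A, Finset.mem_biUnion, Finset.mem_range, Finset.mem_finsuppAntidiag]
    refine ⟨α.degree, by omega, ?_, Finset.subset_univ _⟩
    rw [Finsupp.degree_eq_sum]
  obtain ⟨τ, _, hτ⟩ := ih (R * A.card)
  refine ⟨ι × τ, inferInstance, fun S hS hhom => ?_⟩
  have claim : ∀ T : Finset ι, ∃ e : ι → τ → k, (∀ i ∈ T, e i ≠ 0) ∧ (∀ i, i ∉ T → e i = 0) ∧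
      ∀ f ∈ S, ∃ c : ι → k, ∀ x : ι → k,
        eval (fun p => x p.1 * e p.1 p.2) f = ∑ i, c i * x i ^ (d + 1) := by
    intro T
    induction T using Finset.induction_on with
    | empty =>
      refine ⟨0, by simp, by simp, fun f hf => ⟨0, fun x => ?_⟩⟩
      obtain ⟨j, hj1, -, hj⟩ := hhom f hf
      have := hom_eval_smul f j hj 0 0
      rw [zero_pow (by omega)] at this
      simpa using this
    | insert i0 T hi0 ihT =>
      obtain ⟨e, he1, he2, he⟩ := ihT
      obtain ⟨w, hw0, hw⟩ := hτ
        (((S ×ˢ A).image fun q => coeff q.2 (blockSub e i0 q.1)).filter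
          fun g => ∃ j, 1 ≤ j ∧ j ≤ d ∧ g.IsHomogeneous j)
        (by
          refine (Finset.card_filter_le _ _).trans (Finset.card_image_le.trans ?_)
          rw [Finset.card_product]
          exact Nat.mul_le_mul_right _ hS)
        (fun g hg => (Finset.mem_filter.mp hg).2)
      refine ⟨Function.update e i0 w, ?_, ?_, ?_⟩
      · intro i hi
        by_cases h : i = i0
        · subst h; simpa using hw0
        · rw [Function.update_of_ne h]
          exact he1 i (by simpa [h] using hi)
      · intro i hi
        simp only [Finset.mem_insert, not_or] at hi
        rw [Function.update_of_ne hi.1]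
        exact he2 i hi.2
      · intro f hf
        obtain ⟨D, hD1, hD2, hD⟩ := hhom f hf
        obtain ⟨c0, hc0⟩ := step_aux d e i0 f D hD hD2 w (by
          intro α hα j h1 h2 h3
          refine hw _ (Finset.mem_filter.mpr ⟨?_, j, h1, h2, h3⟩)
          exact Finset.mem_image.mpr ⟨(f, α), Finset.mem_product.mpr ⟨hf, hA α hα⟩, rfl⟩)
        obtain ⟨c, hc⟩ := he f hf
        refine ⟨fun i => c i + if i = i0 then c0 else 0, fun x => ?_⟩
        have h1 : (fun p : ι × τ => x p.1 * Function.update e i0 w p.1 p.2) =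
            fun p => x p.1 * e p.1 p.2 + if p.1 = i0 then x i0 * w p.2 else 0 := by
          funext p
          by_cases h : p.1 = i0
          · simp [h, he2 i0 hi0]
          · simp [h]
        rw [h1, hc0, hc]
        simp [add_mul, Finset.sum_add_distrib, ite_mul]
  obtain ⟨e, he1, -, he⟩ := claim Finset.univ
  choose! c hc using he
  obtain ⟨x, hx0, hx⟩ := hι (S.image c) (Finset.card_image_le.trans hS)
  refine ⟨fun p => x p.1 * e p.1 p.2, ?_, ?_⟩
  · obtain ⟨i, hi⟩ := Function.ne_iff.mp hx0
    obtain ⟨l, hl⟩ := Function.ne_iff.mp (he1 i (Finset.mem_univ i))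
    intro h
    exact mul_ne_zero hi hl (congrFun h (i, l))
  · intro f hf
    rw [hc f hf]
    exact hx _ (Finset.mem_image_of_mem _ hf)

lemma brauerP_all {k : Type*} [Field k] (hk : IsBrauerField k) (d : ℕ) : BrauerP k d := by
  induction d with
  | zero => exact brauerP_zero k
  | succ d ih => exact brauerP_succ hk d ih

end BrauerAux

/-- **Brauer's theorem.** Over a Brauer field `k`, for every multi-degree
`d = (d_1, …, d_r)` there is a constant `C` such that any tuple of homogeneous polynomials
of degrees `d_1, …, d_r` in more than `C` variables has a common nonzero zero over `k`. -/
theorem brauer_theorem (k : Type*) [Field k] (hk : IsBrauerField k)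
    (r : ℕ) (d : Fin r → ℕ) (hanti : Antitone d) (hpos : ∀ i, 1 ≤ d i) :
    ∃ C : ℕ, ∀ N : ℕ, C < N → ∀ f : Fin r → MvPolynomial (Fin N) k,
      (∀ i, (f i).IsHomogeneous (d i)) →
      ∃ v : Fin N → k, v ≠ 0 ∧ ∀ i, eval v (f i) = 0 := by
  classical
  obtain ⟨τ, _, hτ⟩ := brauerP_all hk (∑ i, d i) r
  refine ⟨Fintype.card τ, fun N hN f hf => ?_⟩
  obtain ⟨φ⟩ : Nonempty (τ ↪ Fin N) :=
    Function.Embedding.nonempty_of_card_le (by simpa using hN.le)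
  let L : Fin N → MvPolynomial τ k := fun n => if h : ∃ t, φ t = n then X h.choose else 0
  have hL : ∀ n, (L n).IsHomogeneous 1 := by
    intro n
    simp only [L]
    split_ifs
    · exact isHomogeneous_X _ _
    · exact isHomogeneous_zero _ _ _
  obtain ⟨v, hv0, hv⟩ := hτ (Finset.univ.image fun i => aeval L (f i))
    (Finset.card_image_le.trans (by simp)) (by
      intro g hg
      obtain ⟨i, -, rfl⟩ := Finset.mem_image.mp hg
      refine ⟨d i, hpos i, Finset.single_le_sum (fun _ _ => Nat.zero_le _) (Finset.mem_univ i), ?_⟩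
      simpa using (hf i).aeval L hL)
  refine ⟨fun n => eval v (L n), ?_, fun i => ?_⟩
  · obtain ⟨t, ht⟩ := Function.ne_iff.mp hv0
    intro h
    apply ht
    have h1 := congrFun h (φ t)
    have hex : ∃ t', φ t' = φ t := ⟨t, rfl⟩
    have h2 : hex.choose = t := φ.injective hex.choose_spec
    simpa [L, hex, h2] using h1
  · have := hv _ (Finset.mem_image_of_mem _ (Finset.mem_univ i))
    rw [← this, aeval_def, algebraMap_eq, ← coe_eval₂Hom, ← RingHom.comp_apply]
    congr 1
    ext <;> simp
end

section
/- Let k be an infinite Brauer field and let d ≥ 1 be an integer that is not a multiple of the characteristic of k. Then there exists a constant C, depending only on d and k, such that for every n ≥ C and every choice of nonzero elements a_1, ..., a_n ∈ k, the equation a_1 x_1^d + ... + a_n x_n^d = 1 has a solution with x_1, ..., x_n ∈ k. -/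
/-- The iterated difference sets of the set of `d`-th powers. -/
def diffPow (k : Type*) [Field k] (d : ℕ) : ℕ → Set k
  | 0 => {s | ∃ x : k, s = x ^ d}
  | r + 1 => {s | ∃ u ∈ diffPow k d r, ∃ v ∈ diffPow k d r, s = u - v}

lemma diffPow_pow_mul {k : Type*} [Field k] (d r : ℕ) (y : k) :
    ∀ s ∈ diffPow k d r, y ^ d * s ∈ diffPow k d r := by
  induction r with
  | zero => rintro s ⟨x, rfl⟩; exact ⟨y * x, by rw [mul_pow]⟩
  | succ r ih =>
    rintro s ⟨u, hu, v, hv, rfl⟩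
    exact ⟨_, ih u hu, _, ih v hv, by ring⟩

lemma diffPow_zero_mem {k : Type*} [Field k] {d : ℕ} (hd : 1 ≤ d) (r : ℕ) :
    (0 : k) ∈ diffPow k d r := by
  induction r with
  | zero => exact ⟨0, by rw [zero_pow (by omega)]⟩
  | succ r ih => exact ⟨0, ih, 0, ih, by simp⟩

lemma diffPow_mono {k : Type*} [Field k] {d : ℕ} (hd : 1 ≤ d) :
    Monotone (diffPow k d) := by
  apply monotone_nat_of_le_succ
  intro r s hs
  exact ⟨s, hs, 0, diffPow_zero_mem hd r, by simp⟩

lemma diffPow_add {k : Type*} [Field k] {d : ℕ} (hd : 1 ≤ d) (r : ℕ) {s t : k}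
    (hs : s ∈ diffPow k d r) (ht : t ∈ diffPow k d r) : s + t ∈ diffPow k d (r + 2) :=
  ⟨s, diffPow_mono hd (Nat.le_succ r) hs, 0 - t, ⟨0, diffPow_zero_mem hd r, t, ht, rfl⟩, by ring⟩

lemma diffPow_sum {k : Type*} [Field k] {d : ℕ} (hd : 1 ≤ d) (r m : ℕ) (f : Fin m → k)
    (hf : ∀ i, f i ∈ diffPow k d r) : ∑ i, f i ∈ diffPow k d (r + 2 * m) := by
  induction m with
  | zero => simpa using diffPow_zero_mem hd r
  | succ m ih =>
    rw [Fin.sum_univ_castSucc]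
    exact diffPow_add hd _ (ih _ fun i => hf _) (diffPow_mono hd (Nat.le_add_right r (2 * m)) (hf _))

lemma diffPow_mul {k : Type*} [Field k] {d : ℕ} (hd : 1 ≤ d) {a b : k} {r q : ℕ}
    (hr : a ∈ diffPow k d r) (hq : b ∈ diffPow k d q) : ∃ m, a * b ∈ diffPow k d m := by
  induction r generalizing a with
  | zero =>
    obtain ⟨x, rfl⟩ := hr
    exact ⟨q, diffPow_pow_mul d q x b hq⟩
  | succ r ih =>
    obtain ⟨u, hu, v, hv, rfl⟩ := hr
    obtain ⟨r1, h1⟩ := ih hu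
    obtain ⟨r2, h2⟩ := ih hv
    exact ⟨max r1 r2 + 1, _, diffPow_mono hd (le_max_left _ _) h1,
      _, diffPow_mono hd (le_max_right _ _) h2, by ring⟩

/-- The union of the difference sets is a subfield. -/
def diffField (k : Type*) [Field k] (d : ℕ) (hd : 1 ≤ d) : Subfield k where
  carrier := {s | ∃ r, s ∈ diffPow k d r}
  zero_mem' := ⟨0, diffPow_zero_mem hd 0⟩
  one_mem' := ⟨0, 1, by simp⟩
  add_mem' := by
    rintro a b ⟨r, hr⟩ ⟨q, hq⟩
    exact ⟨_, diffPow_add hd (max r q) (diffPow_mono hd (le_max_left _ _) hr)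
      (diffPow_mono hd (le_max_right _ _) hq)⟩
  neg_mem' := by
    rintro a ⟨r, hr⟩
    exact ⟨r + 1, 0, diffPow_zero_mem hd r, a, hr, by simp⟩
  mul_mem' := by
    rintro a b ⟨r, hr⟩ ⟨q, hq⟩
    exact diffPow_mul hd hr hq
  inv_mem' := by
    rintro a ⟨r, hr⟩
    have key : ∀ m : ℕ, ∃ q, a ^ m ∈ diffPow k d q := by
      intro m
      induction m with
      | zero => exact ⟨0, 1, by simp⟩
      | succ m ih =>
        obtain ⟨q, hq⟩ := ih
        rw [pow_succ]
        exact diffPow_mul hd hq hr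
    obtain ⟨q, hq⟩ := key (d - 1)
    refine ⟨q, ?_⟩
    have := diffPow_pow_mul d q a⁻¹ _ hq
    by_cases h0 : a = 0
    · subst h0; simpa using diffPow_zero_mem hd q
    · convert this using 1
      obtain ⟨e, rfl⟩ : ∃ e, d = e + 1 := ⟨d - 1, by omega⟩
      simp only [Nat.add_sub_cancel]
      rw [inv_pow, pow_succ]
      field_simp

lemma diffField_infinite (k : Type*) [Field k] [Infinite k] (d : ℕ) (hd : 1 ≤ d) :
    Infinite (diffField k d hd) := by
  by_contra h
  rw [not_infinite_iff_finite] at h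
  have hfin : (Set.univ : Set k).Finite := by
    have : (⋃ c : diffField k d hd, {x : k | x ^ d = (c : k)}).Finite := by
      apply Set.finite_iUnion
      intro c
      have := (Polynomial.nthRootsFinset d (c : k)).finite_toSet
      refine this.subset ?_
      intro x hx
      simpa [Polynomial.mem_nthRootsFinset (show 0 < d by omega)] using hx
    refine this.subset ?_
    intro x _
    exact Set.mem_iUnion.2 ⟨⟨x ^ d, 0, x, rfl⟩, rfl⟩
  exact Set.infinite_univ hfin

lemma exists_coeffs (K : Type*) [Field K] [Infinite K] (d : ℕ) (hd : 1 ≤ d) :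
    ∃ b c : Fin (d + 1) → K, ∀ i ≤ d, ∑ j, c j * b j ^ i = if i = d - 1 then 1 else 0 := by
  let b : Fin (d + 1) → K := fun i => Infinite.natEmbedding K i
  have hb : Function.Injective b := fun i j h =>
    Fin.ext ((Infinite.natEmbedding K).injective h)
  have hdet : IsUnit (Matrix.vandermonde b).det :=
    (Matrix.det_vandermonde_ne_zero_iff.2 hb).isUnit
  let e : Fin (d + 1) → K := fun i => if (i : ℕ) = d - 1 then 1 else 0
  refine ⟨b, Matrix.vecMul e (Matrix.vandermonde b)⁻¹, ?_⟩
  intro i hi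
  have h : Matrix.vecMul (Matrix.vecMul e (Matrix.vandermonde b)⁻¹) (Matrix.vandermonde b) = e := by
    rw [Matrix.vecMul_vecMul, Matrix.nonsing_inv_mul _ hdet, Matrix.vecMul_one]
  have := congrFun h ⟨i, by omega⟩
  simpa [Matrix.vecMul, dotProduct, Matrix.vandermonde_apply, e] using this

lemma diffPow_eq_univ (k : Type*) [Field k] [Infinite k] (d : ℕ) (hd : 1 ≤ d)
    (hdk : (d : k) ≠ 0) : ∃ r, ∀ y : k, y ∈ diffPow k d r := by
  have := diffField_infinite k d hd
  obtain ⟨b, c, hbc⟩ := exists_coeffs (diffField k d hd) d hd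
  have hc : ∀ j, ∃ r, (c j : k) ∈ diffPow k d r := fun j => (c j).2
  choose r hr using hc
  refine ⟨Finset.univ.sup r + 2 * (d + 1), fun y => ?_⟩
  have hmem := diffPow_sum hd (Finset.univ.sup r) (d + 1)
    (fun j => ((b j : k) + y / d) ^ d * (c j : k)) (fun j => diffPow_pow_mul d _ _ _
      (diffPow_mono hd (Finset.le_sup (Finset.mem_univ j)) (hr j)))
  convert hmem using 1
  have h2 : ∀ i ≤ d, ∑ j, (c j : k) * (b j : k) ^ i = if i = d - 1 then 1 else 0 := by
    intro i hi
    have := congrArg (fun z : diffField k d hd => (z : k)) (hbc i hi)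
    push_cast at this
    rw [this]
    split_ifs <;> simp
  symm
  calc ∑ j, ((b j : k) + y / d) ^ d * (c j : k)
      = ∑ j, ∑ i ∈ Finset.range (d + 1),
          (c j : k) * (b j : k) ^ i * ((y / d) ^ (d - i) * (d.choose i : k)) := by
        refine Finset.sum_congr rfl fun j _ => ?_
        rw [add_pow, Finset.sum_mul]
        exact Finset.sum_congr rfl fun i _ => by ring
    _ = ∑ i ∈ Finset.range (d + 1), (if i = d - 1 then 1 else 0) *
          ((y / d) ^ (d - i) * (d.choose i : k)) := by
        rw [Finset.sum_comm]
        refine Finset.sum_congr rfl fun i hi => ?_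
        rw [← Finset.sum_mul, h2 i (by simpa [Nat.lt_succ_iff] using hi)]
    _ = y := by
        obtain ⟨e, rfl⟩ : ∃ e, d = e + 1 := ⟨d - 1, by omega⟩
        rw [Finset.sum_eq_single e]
        · simp only [Nat.add_sub_cancel, if_true, Nat.add_sub_cancel_left, Nat.choose_succ_self_right]
          field_simp
        · intro i _ hi
          simp [hi]
        · intro h; exact absurd (Finset.mem_range.2 (by omega)) h

lemma diffPow_represented {k : Type*} [Field k] (hk : IsBrauerField k)
    (d : ℕ) (hd : 1 ≤ d) (r : ℕ) :
    ∃ C : ℕ, ∀ a : Fin C → k, (∀ i, a i ≠ 0) → ∃ b : k, b ≠ 0 ∧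
      ∀ s ∈ diffPow k d r, ∃ x : Fin C → k, ∑ i, a i * x i ^ d = b * s := by
  induction r with
  | zero =>
    refine ⟨1, fun a ha => ⟨a 0, ha 0, ?_⟩⟩
    rintro s ⟨x, rfl⟩
    exact ⟨fun _ => x, by simp⟩
  | succ r ih =>
    obtain ⟨C, hC⟩ := ih
    obtain ⟨N, hN⟩ := hk d hd
    refine ⟨(N + 1) * C, fun a ha => ?_⟩
    choose b hb0 hb using fun l : Fin (N + 1) =>
      hC (fun i => a (finProdFinEquiv (l, i))) (fun i => ha _)
    obtain ⟨v, hv0, hv⟩ := hN (N + 1) (Nat.lt_succ_self N) b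
    obtain ⟨l0, hl0⟩ := Function.ne_iff.1 hv0
    simp only [Pi.zero_apply] at hl0
    refine ⟨b l0, hb0 l0, ?_⟩
    rintro s ⟨u, hu, t, ht, rfl⟩
    have hw : ∀ l, (if l = l0 then u else (v l / v l0) ^ d * t) ∈ diffPow k d r := by
      intro l
      split_ifs
      · exact hu
      · exact diffPow_pow_mul d r _ t ht
    choose x hx using fun l => hb l _ (hw l)
    refine ⟨fun i => x (finProdFinEquiv.symm i).1 (finProdFinEquiv.symm i).2, ?_⟩
    rw [← finProdFinEquiv.sum_comp, Fintype.sum_prod_type]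
    simp only [Equiv.symm_apply_apply, hx]
    have h1 : ∑ l, b l * ((v l / v l0) ^ d * t) = 0 := by
      have : ∀ l, b l * ((v l / v l0) ^ d * t) = (b l * v l ^ d) * (t / v l0 ^ d) := by
        intro l; rw [div_pow]; ring
      simp only [this]
      rw [← Finset.sum_mul, hv, zero_mul]
    rw [← Finset.add_sum_erase _ _ (Finset.mem_univ l0)] at h1 ⊢
    rw [div_self hl0, one_pow, one_mul] at h1
    rw [if_pos rfl, mul_sub, sub_eq_add_neg, add_right_inj]
    rw [eq_neg_iff_add_eq_zero, add_comm, ← h1, add_right_inj]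
    refine Finset.sum_congr rfl fun l hl => ?_
    rw [if_neg (Finset.ne_of_mem_erase hl)]

/-- Over an infinite Brauer field `k`, if `d ≥ 1` is not a multiple of the characteristic
of `k`, then there is a constant `C` such that every diagonal equation
`a_1 x_1^d + ⋯ + a_n x_n^d = 1` with `n ≥ C` and all `a_i` nonzero has a solution in `k`. -/
theorem diagonal_represents_one (k : Type*) [Field k] [Infinite k] (hk : IsBrauerField k)
    (d : ℕ) (hd : 1 ≤ d) (hchar : ¬ (ringChar k ∣ d)) :
    ∃ C : ℕ, ∀ n : ℕ, C ≤ n → ∀ a : Fin n → k, (∀ i, a i ≠ 0) →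
      ∃ x : Fin n → k, ∑ i, a i * x i ^ d = 1 := by
  have hdk : (d : k) ≠ 0 := fun h => hchar ((ringChar.spec k d).1 h)
  obtain ⟨r, hr⟩ := diffPow_eq_univ k d hd hdk
  obtain ⟨C, hC⟩ := diffPow_represented hk d hd r
  refine ⟨C, fun n hn a ha => ?_⟩
  obtain ⟨m, rfl⟩ := Nat.exists_eq_add_of_le hn
  obtain ⟨b, hb0, hb⟩ := hC (fun i => a (Fin.castAdd m i)) (fun i => ha _)
  obtain ⟨x, hx⟩ := hb b⁻¹ (hr _)
  refine ⟨Fin.append x (fun _ => 0), ?_⟩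
  rw [Fin.sum_univ_add]
  simp only [Fin.append_left, Fin.append_right, hx, zero_pow (show d ≠ 0 by omega)]
  simp [hb0]
end

section
/- Let k be a field such that −1 is a sum of finitely many squares in k (i.e., k is non-real) and such that the quotient group k^× / (k^×)^d is finite for every integer d ≥ 1. Then k is a Brauer field. -/
/-- Separation of a point from a rational cone by a nonzero real functional. -/
theorem bf_sep (n : ℕ) (C : PointedCone ℚ (Fin n → ℚ)) (g : Fin n → ℚ) (hg : g ∉ C) :
    ∃ l : (Fin n → ℚ) →+ ℝ, l ≠ 0 ∧ (∀ c ∈ C, 0 ≤ l c) ∧ l g ≤ 0 := by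
  classical
  obtain ⟨M, hCM, hM⟩ := zorn_le_nonempty₀ {M : PointedCone ℚ (Fin n → ℚ) | g ∉ M} (by
    intro c hc hch y hy
    refine ⟨sSup c, ?_, fun z hz => le_sSup hz⟩
    intro hmem
    rw [Submodule.mem_sSup_of_directed ⟨y, hy⟩ hch.directedOn] at hmem
    obtain ⟨z, hz, hgz⟩ := hmem
    exact hc hz hgz) C hg
  have hgM : g ∉ M := hM.prop
  have smul_mem : ∀ (q : ℚ) (w : Fin n → ℚ), 0 ≤ q → w ∈ M → q • w ∈ M := by
    intro q w hq hw
    exact Submodule.smul_mem M (⟨q, hq⟩ : {c : ℚ // 0 ≤ c}) hw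
  have ext : ∀ w, w ∉ M → ∃ a ∈ M, ∃ r : ℚ, 0 ≤ r ∧ g = a + r • w := by
    intro w hw
    by_contra hcon
    have h1 : g ∉ M ⊔ Submodule.span _ {w} := by
      intro hmem
      rw [Submodule.mem_sup] at hmem
      obtain ⟨a, ha, b, hb, hab⟩ := hmem
      rw [Submodule.mem_span_singleton] at hb
      obtain ⟨r, hr⟩ := hb
      exact hcon ⟨a, ha, r.1, r.2, by rw [← hab, ← hr]; rfl⟩
    have h2 := hM.le_of_ge (y := M ⊔ Submodule.span _ {w}) h1 le_sup_left
    exact hw (h2 (Submodule.mem_sup_right (Submodule.mem_span_singleton_self w)))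
  have total : ∀ w, w ∉ M → -w ∈ M := by
    intro w hw
    by_contra hw'
    obtain ⟨a, ha, r, hr, h1⟩ := ext w hw
    obtain ⟨b, hb, s, hs, h2⟩ := ext _ hw'
    have hr0 : 0 < r := by
      rcases hr.eq_or_lt with h | h
      · exfalso; apply hgM; rw [h1, ← h]; simpa using ha
      · exact h
    have h3 : (s + r) • g = s • a + r • b := by
      rw [add_smul]
      nth_rewrite 1 [h1]
      rw [h2]
      ext i
      simp
      ring
    have h4 : g = (s + r)⁻¹ • (s • a + r • b) := by
      rw [← h3, smul_smul, inv_mul_cancel₀ (by positivity), one_smul]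
    apply hgM
    rw [h4]
    exact smul_mem _ _ (by positivity) (M.add_mem (smul_mem _ _ hs ha) (smul_mem _ _ hr hb))
  let e : Fin n → (Fin n → ℚ) := fun i => Pi.single i 1
  let f : Fin n → (Fin n → ℚ) := fun i => if e i ∈ M then e i else - e i
  have hf : ∀ i, f i ∈ M := by
    intro i
    by_cases h : e i ∈ M
    · simp [f, h]
    · simpa [f, h] using total _ h
  let u := ∑ i, f i
  have hu : u ∈ M := Submodule.sum_mem _ fun i _ => hf i
  have key : ∀ i, ∀ v ∈ M, v - u ∈ M → v - f i ∈ M := by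
    intro i v hv h
    have : v - f i = (v - u) + ∑ j ∈ Finset.univ.erase i, f j := by
      have := Finset.add_sum_erase Finset.univ f (Finset.mem_univ i)
      simp only [u]
      rw [← this]; abel
    rw [this]
    exact M.add_mem h (Submodule.sum_mem _ fun i _ => hf i)
  have decomp : ∀ w : Fin n → ℚ, w = ∑ i, w i • e i := by
    intro w
    ext j
    simp [e, Finset.sum_apply, Pi.single_apply]
  have hnu : -u ∉ M := by
    intro hneg
    apply hgM
    have h1 : ∀ i, - f i ∈ M := by
      intro i
      simpa using key i 0 M.zero_mem (by simpa using hneg)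
    have h2 : ∀ i (q : ℚ), q • e i ∈ M := by
      intro i q
      have h3 : ∀ q : ℚ, q • f i ∈ M := by
        intro q
        rcases le_total 0 q with h | h
        · exact smul_mem _ _ h (hf i)
        · have := smul_mem (-q) _ (by linarith) (h1 i)
          simpa using this
      by_cases h : e i ∈ M
      · simpa [f, h] using h3 q
      · simpa [f, h] using h3 (-q)
    rw [decomp g]
    exact Submodule.sum_mem _ fun i _ => h2 i _
  have bdd1 : ∀ i (q : ℚ), |q| • u - q • e i ∈ M := by
    intro i q
    have hA : u - f i ∈ M := key i u hu (by simp)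
    have h1 : u - e i ∈ M := by
      by_cases h : e i ∈ M
      · simpa [f, h] using hA
      · rw [sub_eq_add_neg]; exact M.add_mem hu (total _ h)
    have h2 : u + e i ∈ M := by
      by_cases h : e i ∈ M
      · exact M.add_mem hu h
      · simpa [f, h] using hA
    rcases le_total 0 q with h | h
    · rw [abs_of_nonneg h, ← smul_sub]; exact smul_mem _ _ h h1
    · have := smul_mem (-q) _ (by linarith) h2
      rw [abs_of_nonpos h]
      convert this using 1
      rw [smul_add, neg_smul, neg_smul]; abel
  have bdd : ∀ w : Fin n → ℚ, (∑ i, |w i|) • u - w ∈ M := by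
    intro w
    have : (∑ i, |w i|) • u - w = ∑ i, (|w i| • u - w i • e i) := by
      rw [Finset.sum_sub_distrib, ← decomp, Finset.sum_smul]
    rw [this]
    exact Submodule.sum_mem _ fun i _ => bdd1 i _
  let L : (Fin n → ℚ) → ℝ := fun w => sSup {x : ℝ | ∃ q : ℚ, (q : ℝ) = x ∧ w - q • u ∈ M}
  have cmp : ∀ (w : Fin n → ℚ) (q r : ℚ), w - q • u ∈ M → -(w - r • u) ∈ M → q ≤ r := by
    intro w q r h1 h2
    by_contra! hlt
    apply hnu
    have h3 := M.add_mem h1 h2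
    have h4 := smul_mem (q - r)⁻¹ _ (by rw [inv_nonneg]; linarith) h3
    convert h4 using 1
    have : w - q • u + -(w - r • u) = (q - r) • (-u) := by
      rw [smul_neg, sub_smul]; abel
    rw [this, smul_smul, inv_mul_cancel₀ (by linarith), one_smul]
  have upper : ∀ (w : Fin n → ℚ) (r : ℚ), -(w - r • u) ∈ M → L w ≤ r := by
    intro w r h
    apply csSup_le
    · refine ⟨_, -(∑ i, |(-w) i|), rfl, ?_⟩
      have := bdd (-w)
      convert this using 1
      rw [neg_smul]; abel
    · rintro x ⟨q, rfl, hq⟩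
      exact_mod_cast cmp w q r hq h
  have lower : ∀ (w : Fin n → ℚ) (r : ℚ), (w - r • u) ∈ M → r ≤ L w := by
    intro w r h
    apply le_csSup
    · refine ⟨((∑ i, |w i| : ℚ) : ℝ), ?_⟩
      rintro x ⟨q, rfl, hq⟩
      have := cmp w q (∑ i, |w i|) hq (by rw [neg_sub]; exact bdd w)
      exact_mod_cast this
    · exact ⟨r, rfl, h⟩
  have upper' : ∀ (w : Fin n → ℚ) (r : ℚ), L w < r → -(w - r • u) ∈ M := by
    intro w r h
    apply total
    intro hm
    exact absurd (lower w r hm) (not_le.mpr h)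
  have lower' : ∀ (w : Fin n → ℚ) (r : ℚ), r < L w → (w - r • u) ∈ M := by
    intro w r h
    by_contra hm
    exact absurd (upper w r (total _ hm)) (not_le.mpr h)
  have Ladd : ∀ a b, L (a + b) = L a + L b := by
    intro a b
    apply le_antisymm
    · apply le_of_forall_pos_le_add
      intro ε hε
      obtain ⟨q, hq1, hq2⟩ := exists_rat_btwn (show L a < L a + ε / 2 by linarith)
      obtain ⟨r, hr1, hr2⟩ := exists_rat_btwn (show L b < L b + ε / 2 by linarith)
      have := upper (a + b) (q + r) (by
        convert M.add_mem (upper' a q hq1) (upper' b r hr1) using 1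
        rw [add_smul]; abel)
      push_cast at this
      linarith
    · apply le_of_forall_pos_le_add
      intro ε hε
      obtain ⟨q, hq1, hq2⟩ := exists_rat_btwn (show L a - ε / 2 < L a by linarith)
      obtain ⟨r, hr1, hr2⟩ := exists_rat_btwn (show L b - ε / 2 < L b by linarith)
      have := lower (a + b) (q + r) (by
        convert M.add_mem (lower' a q hq2) (lower' b r hr2) using 1
        rw [add_smul]; abel)
      push_cast at this
      linarith
  refine ⟨AddMonoidHom.mk' L Ladd, ?_, ?_, ?_⟩
  · intro h0
    have h1 : L u = 0 := by
      have := DFunLike.congr_fun h0 u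
      simpa using this
    have h2 := lower u 1 (by simp)
    rw [h1] at h2
    norm_num at h2
  · intro c hc
    have := lower c 0 (by simpa using hCM hc)
    simpa using this
  · have := upper g 0 (by simpa using total g hgM)
    simpa using this

/-- Moments of the centered Gaussian of variance `s`. -/
def bfMom {K : Type*} [Field K] (s : K) : ℕ → K
  | 0 => 1
  | 1 => 0
  | l + 2 => (l + 1) * s * bfMom s l

theorem bf_integrable (l : ℕ) :
    MeasureTheory.Integrable (fun x : ℝ => x ^ l * Real.exp (-(1/2) * x ^ 2)) := by
  have := integrable_rpow_mul_exp_neg_mul_sq (b := 1/2) (by norm_num) (s := l)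
    (by have : (0:ℝ) ≤ l := Nat.cast_nonneg l
        linarith)
  simpa using this

theorem bf_int_rec (l : ℕ) :
    ∫ x : ℝ, x ^ (l + 2) * Real.exp (-(1/2) * x ^ 2)
      = (l + 1) * ∫ x : ℝ, x ^ l * Real.exp (-(1/2) * x ^ 2) := by
  have hd : ∀ x : ℝ, HasDerivAt (fun x : ℝ => x ^ (l + 1) * Real.exp (-(1/2) * x ^ 2))
      ((l + 1) * (x ^ l * Real.exp (-(1/2) * x ^ 2))
        - x ^ (l + 2) * Real.exp (-(1/2) * x ^ 2)) x := by
    intro x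
    have h1 := hasDerivAt_pow (l + 1) x
    have h2 := ((hasDerivAt_pow 2 x).const_mul (-(1/2 : ℝ))).exp
    refine (h1.mul h2).congr_deriv ?_
    simp only [Nat.add_sub_cancel]
    push_cast
    ring
  have := MeasureTheory.integral_eq_zero_of_hasDerivAt_of_integrable hd
    (((bf_integrable l).const_mul _).sub (bf_integrable (l + 2))) (bf_integrable (l + 1))
  rw [MeasureTheory.integral_sub ((bf_integrable l).const_mul _) (bf_integrable (l + 2)),
    MeasureTheory.integral_const_mul] at this
  linarith

theorem bf_int_one : ∫ x : ℝ, x ^ 1 * Real.exp (-(1/2) * x ^ 2) = 0 := by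
  have hd : ∀ x : ℝ, HasDerivAt (fun x : ℝ => -(x ^ 0 * Real.exp (-(1/2) * x ^ 2)))
      (x ^ 1 * Real.exp (-(1/2) * x ^ 2)) x := by
    intro x
    have h2 := (((hasDerivAt_pow 2 x).const_mul (-(1/2 : ℝ))).exp).neg
    simp only [pow_zero, one_mul]
    refine h2.congr_deriv ?_
    push_cast
    ring
  exact MeasureTheory.integral_eq_zero_of_hasDerivAt_of_integrable hd
    (bf_integrable 1) (bf_integrable 0).neg

theorem bf_int (l : ℕ) : ∫ x : ℝ, x ^ l * Real.exp (-(1/2) * x ^ 2)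
    = bfMom (1 : ℝ) l * ∫ x : ℝ, Real.exp (-(1/2) * x ^ 2) := by
  induction l using Nat.twoStepInduction with
  | zero => simp [bfMom]
  | one => rw [bf_int_one]; simp [bfMom]
  | more l ih _ => rw [bf_int_rec, ih, bfMom]; ring

theorem bf_gauss (n : ℕ) (a : Fin n → ℝ) (hpos : ∀ x : ℝ, 0 ≤ ∑ i, a i * x ^ (i : ℕ))
    (hle : ∑ i, a i * bfMom (1 : ℝ) (i : ℕ) ≤ 0) (i : Fin n) : a i = 0 := by
  set F : ℝ → ℝ := fun x => (∑ i, a i * x ^ (i : ℕ)) * Real.exp (-(1/2) * x ^ 2) with hF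
  have hFe : F = fun x => ∑ i, a i * (x ^ (i : ℕ) * Real.exp (-(1/2) * x ^ 2)) := by
    ext x; rw [hF]; simp only [Finset.sum_mul, mul_assoc]
  have hint : MeasureTheory.Integrable F := by
    rw [hFe]
    exact MeasureTheory.integrable_finsetSum _ fun i _ => (bf_integrable _).const_mul _
  have hnn : 0 ≤ F := fun x => mul_nonneg (hpos x) (Real.exp_pos _).le
  have hI : ∫ x, F x = 0 := by
    apply le_antisymm _ (MeasureTheory.integral_nonneg hnn)
    rw [hFe, MeasureTheory.integral_finsetSum _ fun i _ => (bf_integrable _).const_mul _]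
    simp only [MeasureTheory.integral_const_mul, bf_int]
    simp only [← mul_assoc]
    rw [← Finset.sum_mul]
    exact mul_nonpos_of_nonpos_of_nonneg hle
      (MeasureTheory.integral_nonneg fun x => (Real.exp_pos _).le)
  rw [MeasureTheory.integral_eq_zero_iff_of_nonneg hnn hint] at hI
  have hz : F = 0 := by
    apply MeasureTheory.Measure.eq_of_ae_eq hI _ continuous_zero
    rw [hF]; fun_prop
  let p : Polynomial ℝ := ∑ i : Fin n, Polynomial.monomial (i : ℕ) (a i)
  have hp : p = 0 := by
    apply Polynomial.funext
    intro x
    have := congrFun hz x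
    simp only [hF, Pi.zero_apply, mul_eq_zero, (Real.exp_pos _).ne', or_false] at this
    simpa [p, Polynomial.eval_finsetSum] using this
  have := congrArg (fun q => Polynomial.coeff q (i : ℕ)) hp
  simpa [p, Polynomial.finsetSum_coeff, Polynomial.coeff_monomial, Fin.val_inj] using this

theorem bfMom_cast {K : Type*} [Field K] [CharZero K] (l : ℕ) :
    ((bfMom (1 : ℚ) l : ℚ) : K) = bfMom (1 : K) l := by
  induction l using Nat.twoStepInduction with
  | zero => simp [bfMom]
  | one => simp [bfMom]
  | more l ih _ => simp [bfMom, ih]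

theorem bfMom_zero {K : Type*} [Field K] (l : ℕ) : bfMom (0 : K) l = 0 ^ l := by
  match l with
  | 0 => simp [bfMom]
  | 1 => simp [bfMom]
  | l + 2 => simp [bfMom]

theorem bfMom_add {K : Type*} [Field K] [CharZero K] (a b : K) (l : ℕ) :
    bfMom (a + b) l
      = ∑ i ∈ Finset.range (l + 1), bfMom a i * bfMom b (l - i) * (l.choose i : K) := by
  let E : K → PowerSeries K := fun s => PowerSeries.mk fun l => bfMom s l / (l.factorial : K)
  have hE : ∀ (s : K) (n : ℕ), ((n : K) + 2) * (bfMom s (n + 2) / ((n + 2).factorial : K))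
      = s * (bfMom s n / (n.factorial : K)) := by
    intro s n
    have h1 : (n.factorial : K) ≠ 0 := by exact_mod_cast n.factorial_ne_zero
    have h2 : ((n : K) + 2) ≠ 0 := by exact_mod_cast (by omega : n + 2 ≠ 0)
    have h3 : ((n : K) + 1) ≠ 0 := by exact_mod_cast (by omega : n + 1 ≠ 0)
    rw [bfMom, Nat.factorial_succ, Nat.factorial_succ]
    push_cast
    have h4 : ((n : K) + 1 + 1) ≠ 0 := by rw [add_assoc, one_add_one_eq_two]; exact h2
    field_simp
    ring
  have hD : ∀ s, PowerSeries.derivative K (E s) = PowerSeries.C s * (PowerSeries.X * E s) := by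
    intro s
    ext n
    rw [PowerSeries.coeff_derivative, PowerSeries.coeff_C_mul]
    cases n with
    | zero => simp [E, bfMom]
    | succ n =>
      rw [PowerSeries.coeff_succ_X_mul, PowerSeries.coeff_mk, PowerSeries.coeff_mk, ← hE]
      push_cast
      ring
  have hP : PowerSeries.derivative K (E a * E b)
      = PowerSeries.C (a + b) * (PowerSeries.X * (E a * E b)) := by
    rw [Derivation.leibniz, hD, hD, map_add, smul_eq_mul, smul_eq_mul]
    ring
  have hU : ∀ n, PowerSeries.coeff n (E a * E b) = bfMom (a + b) n / (n.factorial : K) := by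
    intro n
    induction n using Nat.twoStepInduction with
    | zero => simp [E, bfMom]
    | one =>
      have := congrArg (PowerSeries.coeff 0) hP
      rw [PowerSeries.coeff_derivative] at this
      simpa [bfMom] using this
    | more n ih _ =>
      have := congrArg (PowerSeries.coeff (n + 1)) hP
      rw [PowerSeries.coeff_derivative, PowerSeries.coeff_C_mul,
        PowerSeries.coeff_succ_X_mul, ih, ← hE] at this
      have h2 : ((n : K) + 2) ≠ 0 := by exact_mod_cast (by omega : n + 2 ≠ 0)
      apply mul_left_cancel₀ h2
      rw [← this]
      push_cast
      ring
  have hl := hU l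
  have hf : (l.factorial : K) ≠ 0 := by exact_mod_cast l.factorial_ne_zero
  rw [eq_div_iff hf, PowerSeries.coeff_mul,
    Finset.Nat.sum_antidiagonal_eq_sum_range_succ_mk, Finset.sum_mul] at hl
  rw [← hl]
  apply Finset.sum_congr rfl
  intro i hi
  have hi' : i ≤ l := by simpa [Nat.lt_succ_iff] using hi
  have := Nat.choose_mul_factorial_mul_factorial hi'
  have h1 : (i.factorial : K) ≠ 0 := by exact_mod_cast i.factorial_ne_zero
  have h2 : ((l - i).factorial : K) ≠ 0 := by exact_mod_cast (l - i).factorial_ne_zero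
  simp only [E, PowerSeries.coeff_mk]
  rw [← this]
  push_cast
  field_simp

theorem bf_quad (n : ℕ) : ∃ (S : Finset ℚ) (w : ℚ → ℚ), (∀ t ∈ S, 0 < w t) ∧
    ∀ l < n, ∑ t ∈ S, w t * t ^ l = bfMom (1 : ℚ) l := by
  classical
  let v : ℚ → (Fin n → ℚ) := fun t i => t ^ (i : ℕ)
  let g : Fin n → ℚ := fun i => bfMom (1 : ℚ) i
  let C : PointedCone ℚ (Fin n → ℚ) := Submodule.span _ (Set.range v)
  have hg : g ∈ C := by
    by_contra hg
    obtain ⟨L, hL0, hLC, hLg⟩ := bf_sep n C g hg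
    let a : Fin n → ℝ := fun i => L (Pi.single i 1)
    have hL : ∀ w : Fin n → ℚ, L w = ∑ i, a i * (w i : ℝ) := by
      intro w
      have h1 : w = ∑ i, w i • (Pi.single i 1 : Fin n → ℚ) := by
        ext j
        simp [Finset.sum_apply, Pi.single_apply]
      conv_lhs => rw [h1]
      rw [map_sum]
      apply Finset.sum_congr rfl
      intro i _
      rw [map_rat_smul]
      rw [Rat.smul_def, mul_comm]
    have hpos : ∀ x : ℝ, 0 ≤ ∑ i, a i * x ^ (i : ℕ) := by
      have hc : IsClosed {x : ℝ | 0 ≤ ∑ i, a i * x ^ (i : ℕ)} :=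
        isClosed_le continuous_const (by fun_prop)
      have hr : Set.range ((↑) : ℚ → ℝ) ⊆ {x : ℝ | 0 ≤ ∑ i, a i * x ^ (i : ℕ)} := by
        rintro _ ⟨q, rfl⟩
        have := hLC (v q) (Submodule.subset_span ⟨q, rfl⟩)
        rw [hL] at this
        simpa [v] using this
      have h2 := hc.closure_subset_iff.mpr hr
      intro x
      apply h2
      rw [Rat.denseRange_cast.closure_range]
      trivial
    have hz := bf_gauss n a hpos (by
      have := hLg
      rw [hL] at this
      simpa [g, bfMom_cast] using this)
    apply hL0
    refine DFunLike.ext _ _ fun w => ?_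
    rw [hL]
    simp [hz]
  obtain ⟨c, hc⟩ := Finsupp.mem_span_range_iff_exists_finsupp.mp hg
  refine ⟨c.support, fun t => (c t).1, ?_, ?_⟩
  · intro t ht
    have h1 : c t ≠ 0 := by simpa using ht
    exact lt_of_le_of_ne (c t).2 fun h => h1 (Subtype.ext h.symm)
  · intro l hl
    have := congrFun hc ⟨l, hl⟩
    simp only [Finsupp.sum, Finset.sum_apply, g] at this
    rw [← this]
    rfl

theorem bfMom_sq {K : Type*} [Field K] (x : K) (l : ℕ) :
    bfMom (x ^ 2) l = bfMom (1 : K) l * x ^ l := by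
  induction l using Nat.twoStepInduction with
  | zero => simp [bfMom]
  | one => simp [bfMom]
  | more l ih _ => rw [bfMom, bfMom, ih]; ring

/-- The finite weighted family `(w, y)` has the Gaussian moments of variance `s` below `n`. -/
def BfDist {K : Type*} [Field K] (n : ℕ) (s : K) {ι : Type} [Fintype ι] (w : ι → ℚ)
    (y : ι → K) : Prop :=
  (∀ a, 0 < w a) ∧ ∀ l < n, ∑ a, (w a : K) * y a ^ l = bfMom s l

theorem BfDist.add {K : Type*} [Field K] [CharZero K] {n : ℕ} {s s' : K} {ι κ : Type} [Fintype ι]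
    [Fintype κ] {w : ι → ℚ} {y : ι → K} {w' : κ → ℚ} {y' : κ → K} (h : BfDist n s w y)
    (h' : BfDist n s' w' y') :
    BfDist n (s + s') (fun p : ι × κ => w p.1 * w' p.2) (fun p => y p.1 + y' p.2) := by
  refine ⟨fun p => mul_pos (h.1 _) (h'.1 _), ?_⟩
  intro l hl
  rw [bfMom_add, Fintype.sum_prod_type]
  simp only [add_pow, Finset.mul_sum]
  have : ∀ i ∈ Finset.range (l + 1), bfMom s i * bfMom s' (l - i) * (l.choose i : K)
      = ∑ a, ∑ b, ((w a * w' b : ℚ) : K) * (y a ^ i * y' b ^ (l - i) * (l.choose i : K)) := by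
    intro i hi
    have hi' : i ≤ l := by simpa [Nat.lt_succ_iff] using hi
    rw [← h.2 i (by omega), ← h'.2 (l - i) (by omega), Finset.sum_mul_sum, Finset.sum_mul]
    apply Finset.sum_congr rfl
    intro a _
    rw [Finset.sum_mul]
    apply Finset.sum_congr rfl
    intro b _
    push_cast
    ring
  rw [Finset.sum_congr rfl this]
  symm
  rw [Finset.sum_comm]
  apply Finset.sum_congr rfl
  intro a _
  rw [Finset.sum_comm]

theorem bf_dist_sq {K : Type*} [Field K] [CharZero K] (n : ℕ) (x : K) :
    ∃ (ι : Type) (_ : Fintype ι) (w : ι → ℚ) (y : ι → K), BfDist n (x ^ 2) w y := by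
  obtain ⟨S, w, hw, hS⟩ := bf_quad n
  refine ⟨S, inferInstance, fun t => w t, fun t => ((t : ℚ) : K) * x, fun t => hw _ t.2, ?_⟩
  intro l hl
  rw [bfMom_sq, ← bfMom_cast, ← hS l hl, ← Finset.sum_coe_sort S]
  push_cast
  rw [Finset.sum_mul]
  apply Finset.sum_congr rfl
  intro t _
  rw [mul_pow]; ring

theorem bf_dist_sum {K : Type*} [Field K] [CharZero K] (n m : ℕ) (c : Fin m → K) :
    ∃ (ι : Type) (_ : Fintype ι) (w : ι → ℚ) (y : ι → K), BfDist n (∑ i, c i ^ 2) w y := by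
  induction m with
  | zero =>
    refine ⟨Unit, inferInstance, fun _ => 1, fun _ => 0, fun _ => one_pos, ?_⟩
    intro l _
    simp [bfMom_zero]
  | succ m ih =>
    obtain ⟨ι, _, w, y, h⟩ := ih (fun i => c i.castSucc)
    obtain ⟨κ, _, w', y', h'⟩ := bf_dist_sq n (c (Fin.last m))
    rw [Fin.sum_univ_castSucc]
    exact ⟨ι × κ, inferInstance, _, _, h.add h'⟩

theorem bf_zero_sum_rat {K : Type*} [Field K] [CharZero K] (m : ℕ) (c : Fin m → K)
    (hc : ∑ i, c i ^ 2 = -1) (d : ℕ) (hd : 1 ≤ d) :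
    ∃ (ι : Type) (_ : Fintype ι) (w : ι → ℚ) (y : ι → K), (∀ a, 0 < w a) ∧ (∃ a, y a ≠ 0) ∧
      ∑ a, (w a : K) * y a ^ (2 * d) = 0 := by
  obtain ⟨ι, _, w, y, h⟩ := bf_dist_sum (2 * d + 1) m c
  obtain ⟨κ, _, w', y', h'⟩ := bf_dist_sq (2 * d + 1) (1 : K)
  rw [hc] at h
  have h'' := h.add h'
  refine ⟨ι × κ, inferInstance, _, fun p => y p.1 + y' p.2, h''.1, ?_, ?_⟩
  · by_contra! hcon
    have hy : ∀ a b, y a ^ 2 = y' b ^ 2 := by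
      intro a b
      have := hcon (a, b)
      rw [eq_neg_of_add_eq_zero_left this, neg_sq]
    have e1 := h.2 0 (by omega)
    have e2 := h.2 2 (by omega)
    have e3 := h'.2 0 (by omega)
    have e4 := h'.2 2 (by omega)
    simp only [bfMom, pow_zero, mul_one] at e1 e2 e3 e4
    have e5 : ∑ a, ∑ b, ((w a : K) * (w' b : K)) * y a ^ 2 = -1 := by
      have : ∑ a, ∑ b, ((w a : K) * (w' b : K)) * y a ^ 2
          = (∑ a, (w a : K) * y a ^ 2) * ∑ b, (w' b : K) := by
        rw [Finset.sum_mul_sum]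
        refine Finset.sum_congr rfl fun a _ => Finset.sum_congr rfl fun b _ => ?_
        ring
      rw [this, e2, e3]; simp
    have e6 : ∑ a, ∑ b, ((w a : K) * (w' b : K)) * y a ^ 2 = 1 := by
      have : ∑ a, ∑ b, ((w a : K) * (w' b : K)) * y a ^ 2
          = (∑ a, (w a : K)) * ∑ b, (w' b : K) * y' b ^ 2 := by
        rw [Finset.sum_mul_sum]
        refine Finset.sum_congr rfl fun a _ => Finset.sum_congr rfl fun b _ => ?_
        rw [hy a b]; ring
      rw [this, e1, e4]; simp
    rw [e5] at e6
    have : (2 : K) = 0 := by linear_combination -e6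
    exact two_ne_zero this
  · rw [h''.2 (2 * d) (by omega)]
    simp [bfMom_zero]
    omega

theorem bf_zero_sum (K : Type*) [Field K]
    (hK : ∃ (n : ℕ) (c : Fin n → K), ∑ i, c i ^ 2 = -1) (d : ℕ) (hd : 1 ≤ d) :
    ∃ (s : ℕ) (c : Fin s → K), (∃ i, c i ≠ 0) ∧ ∑ i, c i ^ d = 0 := by
  classical
  rcases CharP.exists K with ⟨p, hp⟩
  by_cases hp0 : p = 0
  · subst hp0
    haveI : CharZero K := CharP.charP_to_charZero K
    obtain ⟨m, c, hc⟩ := hK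
    obtain ⟨ι, _, w, y, hw, ⟨a₀, ha₀⟩, hsum⟩ := bf_zero_sum_rat m c hc d hd
    let N : ℕ := ∏ a, (w a).den
    have hN : 0 < N := Finset.prod_pos fun a _ => (w a).den_pos
    have hnat : ∀ a, ∃ k : ℕ, 0 < k ∧ (k : ℚ) = N * w a := by
      intro a
      obtain ⟨e, he⟩ : (w a).den ∣ N := Finset.dvd_prod_of_mem _ (Finset.mem_univ a)
      have h1 : 0 < (w a).num := Rat.num_pos.mpr (hw a)
      have h2 : (N : ℚ) * w a = e * (w a).num := by
        rw [he]; push_cast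
        have := Rat.den_mul_eq_num (w a)
        linear_combination (e : ℚ) * this
      have h3 : ((e * (w a).num.toNat : ℕ) : ℚ) = N * w a := by
        have : (((w a).num.toNat : ℤ) : ℚ) = ((w a).num : ℚ) := by
          rw [Int.toNat_of_nonneg h1.le]
        rw [h2, ← this, Nat.cast_mul, Int.cast_natCast]
      refine ⟨_, ?_, h3⟩
      have h4 : (0 : ℚ) < N * w a := mul_pos (by exact_mod_cast hN) (hw a)
      rw [← h3] at h4
      exact_mod_cast h4
    choose k hk0 hk using hnat
    let I := Σ a, Fin (k a)
    let z : I → K := fun p => y p.1 ^ 2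
    have hz : ∑ p : I, z p ^ d = 0 := by
      rw [Fintype.sum_sigma]
      simp only [z, Finset.sum_const, Finset.card_univ, Fintype.card_fin, nsmul_eq_mul]
      have : ∀ a, (k a : K) = (N : K) * (w a : K) := by
        intro a
        have := congrArg (fun q : ℚ => (q : K)) (hk a)
        simpa using this
      simp only [this, mul_assoc, ← pow_mul, ← Finset.mul_sum, hsum, mul_zero]
    let e := Fintype.equivFin I
    refine ⟨Fintype.card I, fun i => z (e.symm i), ⟨e ⟨a₀, ⟨0, hk0 a₀⟩⟩, ?_⟩, ?_⟩
    · simp [z, ha₀]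
    · rw [Equiv.sum_comp e.symm (fun p => z p ^ d)]
      exact hz
  · refine ⟨p, fun _ => 1, ⟨⟨0, Nat.pos_of_ne_zero hp0⟩, one_ne_zero⟩, ?_⟩
    simp

/-- A non-real field (−1 is a finite sum of squares) with `kˣ/(kˣ)^d` finite for all
`d ≥ 1` is a Brauer field. -/
theorem isBrauerField_of_nonreal_of_finite_power_classes (k : Type*) [Field k]
    (hnonreal : ∃ (n : ℕ) (c : Fin n → k), ∑ i, c i ^ 2 = -1)
    (hfin : ∀ d : ℕ, 1 ≤ d → Finite (kˣ ⧸ (powMonoidHom d : kˣ →* kˣ).range)) :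
    IsBrauerField k := by
  classical
  intro d hd
  have hd0 : d ≠ 0 := by omega
  obtain ⟨s, c, ⟨i₀, hi₀⟩, hc⟩ := bf_zero_sum k hnonreal d hd
  haveI := hfin d hd
  haveI := Fintype.ofFinite (kˣ ⧸ (powMonoidHom d : kˣ →* kˣ).range)
  refine ⟨Fintype.card (kˣ ⧸ (powMonoidHom d : kˣ →* kˣ).range) * s, ?_⟩
  intro n hn a
  by_cases ha : ∃ i, a i = 0
  · obtain ⟨i, hi⟩ := ha
    refine ⟨Pi.single i 1, ?_, ?_⟩
    · intro h
      simpa using congrFun h i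
    · apply Finset.sum_eq_zero
      intro j _
      by_cases hj : j = i
      · subst hj; simp [hi]
      · simp [Pi.single_eq_of_ne hj, hd0]
  · push Not at ha
    let f : Fin n → kˣ ⧸ (powMonoidHom d : kˣ →* kˣ).range :=
      fun i => QuotientGroup.mk (Units.mk0 (a i) (ha i))
    obtain ⟨q, hq⟩ := Fintype.exists_lt_card_fiber_of_mul_lt_card (n := s) f (by simpa using hn)
    obtain ⟨T, hTs, hTc⟩ := Finset.exists_subset_card_eq hq.le
    let e : T ≃ Fin s := Finset.equivFinOfCardEq hTc
    obtain ⟨r, rfl⟩ := QuotientGroup.mk_surjective q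
    have hb : ∀ i : T, ∃ b : kˣ, a i = (r : k) * (b : k) ^ d := by
      intro i
      have h1 := (Finset.mem_filter.mp (hTs i.2)).2
      have h2 := QuotientGroup.eq.mp h1.symm
      obtain ⟨b, hb⟩ := h2
      refine ⟨b, ?_⟩
      have h3 : Units.mk0 (a i) (ha i) = r * b ^ d := by
        have : b ^ d = r⁻¹ * Units.mk0 (a i) (ha i) := hb
        rw [this, mul_inv_cancel_left]
      simpa using congrArg Units.val h3
    choose b hb using hb
    let x : Fin n → k := fun i => if h : i ∈ T then c (e ⟨i, h⟩) / (b ⟨i, h⟩ : k) else 0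
    refine ⟨x, ?_, ?_⟩
    · intro h
      have h1 := congrFun h (e.symm i₀ : Fin n)
      simp [x, hi₀] at h1
    · have h1 : ∑ i, a i * x i ^ d = ∑ i ∈ T, a i * x i ^ d := by
        symm
        apply Finset.sum_subset (Finset.subset_univ _)
        intro i _ hi
        simp [x, hi, hd0]
      rw [h1, ← Finset.sum_coe_sort]
      have h2 : ∀ i : T, a i * x i ^ d = (r : k) * c (e i) ^ d := by
        intro i
        have hbne : (b i : k) ≠ 0 := (b i).ne_zero
        simp only [x, i.2, dif_pos, hb i, div_pow]
        field_simp
      rw [Finset.sum_congr rfl fun i _ => h2 i, ← Finset.mul_sum,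
        Equiv.sum_comp e (fun i => c i ^ d), hc, mul_zero]
end
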